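/- Let G be an n-vertex graph containing no path on t vertices as a subgraph. Then G has at most (t−2)·n/2 edges. -/

import Mathlib

namespace EG

/-- Twice the number of edges inside `S`. -/
def D {V : Type*} (G : SimpleGraph V) [DecidableRel G.Adj] (S : Finset V) : ℕ :=
  ∑ v ∈ S, ∑ w ∈ S, if G.Adj v w then 1 else 0

def dg {V : Type*} (G : SimpleGraph V) [DecidableRel G.Adj] (S : Finset V) (v : V) : ℕ :=
  ∑ w ∈ S, if G.Adj v w then 1 else 0

lemma D_split {V : Type*} [DecidableEq V] (G : SimpleGraph V) [DecidableRel G.Adj]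
    (S C : Finset V) (h : C ⊆ S) :
    D G S = D G (S \ C) + D G C + 2 * ∑ v ∈ C, dg G (S \ C) v := by
  have key : ∑ v ∈ S \ C, ∑ w ∈ C, (if G.Adj v w then 1 else 0)
      = ∑ v ∈ C, ∑ w ∈ S \ C, (if G.Adj v w then 1 else 0) := by
    rw [Finset.sum_comm]
    simp only [G.adj_comm]
  unfold D dg
  rw [← Finset.sum_sdiff h]
  simp_rw [← Finset.sum_sdiff h]
  rw [Finset.sum_add_distrib, Finset.sum_add_distrib, key]
  ring

lemma rot {V : Type*} (G : SimpleGraph V) (a b : List V) (ha : a ≠ []) (hb : b ≠ [])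
    (hc : List.IsChain G.Adj (a ++ b)) (h1 : G.Adj (a.head ha) (b.head hb))
    (h2 : G.Adj (a.getLast ha) (b.getLast hb)) (x : V) (hx : x ∈ a ++ b) :
    ∃ c : List V, List.IsChain G.Adj (x :: c) ∧ (x :: c).Perm (a ++ b) := by
  rw [List.isChain_append] at hc
  obtain ⟨hca, hcb, -⟩ := hc
  have hbr : List.IsChain G.Adj b.reverse := by
    rw [List.isChain_reverse]
    exact hcb.imp fun _ _ h => h.symm
  have hc : List.IsChain G.Adj (a ++ b.reverse) := by
    rw [List.isChain_append]
    refine ⟨hca, hbr, ?_⟩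
    intro u hu w hw
    rw [List.getLast?_eq_some_getLast ha] at hu
    rw [List.head?_reverse, List.getLast?_eq_some_getLast hb] at hw
    simp at hu hw
    subst hu hw
    exact h2
  have hperm : (a ++ b.reverse).Perm (a ++ b) :=
    List.Perm.append_left a (List.reverse_perm b)
  have hcc : List.IsChain G.Adj ((a ++ b.reverse) ++ (a ++ b.reverse)) := by
    rw [List.isChain_append]
    refine ⟨hc, hc, ?_⟩
    intro u hu w hw
    rw [List.getLast?_append_of_ne_nil _ (by simpa using hb), List.getLast?_reverse,
      List.head?_eq_some_head hb] at hu
    rw [List.head?_append_of_ne_nil _ ha, List.head?_eq_some_head ha] at hw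
    simp at hu hw
    subst hu hw
    exact h1.symm
  obtain ⟨p, q, hpq⟩ := List.append_of_mem (hperm.mem_iff.mpr hx)
  rw [hpq] at hcc hperm
  refine ⟨q ++ p, ?_, ?_⟩
  · refine List.IsChain.infix hcc ⟨p, x :: q, ?_⟩
    simp
  · refine List.Perm.trans ?_ hperm
    exact List.perm_append_comm (l₁ := x :: q) (l₂ := p)

lemma main {V : Type*} [DecidableEq V] (G : SimpleGraph V) [DecidableRel G.Adj] (t : ℕ)
    (ht : 2 ≤ t)
    (hp : ∀ l : List V, l.Nodup → List.IsChain G.Adj l → l.length < t) :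
    ∀ (n : ℕ) (S : Finset V), S.card = n → D G S ≤ (t - 2) * S.card := by
  intro n
  induction n using Nat.strong_induction_on with
  | _ n ih =>
  intro S hS
  rcases S.eq_empty_or_nonempty with rfl | hne
  · simp [D]
  by_cases hlow : ∃ v ∈ S, 2 * dg G S v ≤ t - 2
  · obtain ⟨v, hv, hd⟩ := hlow
    have h1 := D_split G S {v} (by simpa using hv)
    have hcard : (S \ {v}).card + 1 = S.card := by
      rw [Finset.sdiff_singleton_eq_erase, Finset.card_erase_add_one hv]
    have h2 := ih _ (by omega) (S \ {v}) rfl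
    have h3 : D G {v} = 0 := by simp [D]
    have h4 : dg G (S \ {v}) v ≤ dg G S v :=
      Finset.sum_le_sum_of_subset Finset.sdiff_subset
    rw [Finset.sum_singleton, h3] at h1
    rw [← hcard, mul_add]
    omega
  · push Not at hlow
    let P : ℕ → Prop := fun m => ∃ l : List V, l.Nodup ∧ List.IsChain G.Adj l ∧
      (∀ x ∈ l, x ∈ S) ∧ l.length = m
    classical
    obtain ⟨v, hv⟩ := hne
    have hP1 : P 1 := ⟨[v], by simp, by simp, by simpa using hv, rfl⟩
    obtain ⟨l, hnd, hch, hlS, hlen⟩ : P (Nat.findGreatest P t) :=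
      Nat.findGreatest_spec (by omega : 1 ≤ t) hP1
    have hmax : ∀ l' : List V, l'.Nodup → List.IsChain G.Adj l' → (∀ x ∈ l', x ∈ S) →
        l'.length ≤ l.length := by
      intro l' h1 h2 h3
      rw [hlen]
      exact Nat.le_findGreatest (hp l' h1 h2).le ⟨l', h1, h2, h3, rfl⟩
    have hpos : 0 < l.length := by
      have := hmax [v] (by simp) (by simp) (by simpa using hv)
      simp only [List.length_cons, List.length_nil] at this; omega
    have hlt := hp l hnd hch
    have hend : ∀ (x : V) (c : List V), List.IsChain G.Adj (x :: c) → (x :: c).Perm l →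
        ∀ w ∈ S, G.Adj x w → w ∈ l := by
      intro x c hc hperm w hw hadj
      by_contra hwl
      have := hmax (w :: x :: c) ?_ ?_ ?_
      · have h2 := hperm.length_eq
        simp at this h2
        omega
      · rw [List.nodup_cons]
        exact ⟨fun h => hwl (hperm.mem_iff.mp h), hperm.nodup_iff.mpr hnd⟩
      · rw [List.isChain_cons_cons]
        exact ⟨hadj.symm, hc⟩
      · intro y hy
        rcases List.mem_cons.mp hy with rfl | hy
        · exact hw
        · exact hlS y (hperm.mem_iff.mp hy)
    have hhead : ∀ w ∈ S, G.Adj l[0] w → w ∈ l := by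
      obtain ⟨x, c, rfl⟩ := List.exists_cons_of_length_pos hpos
      exact hend x c hch (List.Perm.refl _)
    have hlast : ∀ w ∈ S, G.Adj (l[l.length - 1]) w → w ∈ l := by
      have hr : List.IsChain G.Adj l.reverse := by
        rw [List.isChain_reverse]
        exact hch.imp fun _ _ h => h.symm
      obtain ⟨x, c, hxc⟩ := List.exists_cons_of_length_pos (l := l.reverse) (by simpa using hpos)
      have hx : x = l[l.length - 1] := by
        have : l.reverse[0]'(by simpa using hpos) = x := by simp [hxc]
        rw [← this, List.getElem_reverse]; simp
      rw [← hx]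
      exact hend x c (hxc ▸ hr) (hxc ▸ List.reverse_perm l)
    have hdg : ∀ x, dg G S x = (S.filter (G.Adj x)).card := by
      intro x; simp [dg]
    let A := (Finset.range (l.length - 1)).filter (fun i => G.Adj l[0] (l.getD (i+1) v))
    let B := (Finset.range (l.length - 1)).filter
      (fun i => G.Adj (l[l.length - 1]) (l.getD i v))
    have hA : dg G S l[0] ≤ A.card := by
      rw [hdg]
      refine (Finset.card_le_card (t := A.image (fun i => l.getD (i+1) v)) ?_).trans
        Finset.card_image_le
      intro w hw
      rw [Finset.mem_filter] at hw
      obtain ⟨i, hi, rfl⟩ := List.getElem_of_mem (hhead w hw.1 hw.2)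
      rcases i with _ | i
      · exact absurd hw.2 (G.loopless.irrefl _)
      · refine Finset.mem_image.mpr ⟨i, Finset.mem_filter.mpr ⟨?_, ?_⟩, ?_⟩
        · rw [Finset.mem_range]; omega
        · rw [List.getD_eq_getElem _ _ hi]; exact hw.2
        · rw [List.getD_eq_getElem _ _ hi]
    have hB : dg G S (l[l.length - 1]) ≤ B.card := by
      rw [hdg]
      refine (Finset.card_le_card (t := B.image (fun i => l.getD i v)) ?_).trans
        Finset.card_image_le
      intro w hw
      rw [Finset.mem_filter] at hw
      obtain ⟨i, hi, rfl⟩ := List.getElem_of_mem (hlast w hw.1 hw.2)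
      have hne : i ≠ l.length - 1 := by
        rintro rfl
        exact absurd hw.2 (G.loopless.irrefl _)
      refine Finset.mem_image.mpr ⟨i, Finset.mem_filter.mpr ⟨?_, ?_⟩, ?_⟩
      · rw [Finset.mem_range]; omega
      · rw [List.getD_eq_getElem _ _ hi]; exact hw.2
      · rw [List.getD_eq_getElem _ _ hi]
    have hAB : ∃ i, i ∈ A ∧ i ∈ B := by
      by_contra hcon
      have hdis : Disjoint A B := by
        rw [Finset.disjoint_left]
        intro i h1 h2
        exact hcon ⟨i, h1, h2⟩
      have h1 := Finset.card_union_of_disjoint hdis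
      have h2 : (A ∪ B).card ≤ (Finset.range (l.length - 1)).card :=
        Finset.card_le_card (Finset.union_subset (Finset.filter_subset _ _)
          (Finset.filter_subset _ _))
      rw [Finset.card_range] at h2
      have h3 := hlow l[0] (hlS _ (List.getElem_mem _))
      have h4 := hlow (l[l.length - 1]) (hlS _ (List.getElem_mem _))
      omega
    obtain ⟨i, hiA, hiB⟩ := hAB
    obtain ⟨hi, hiA⟩ := Finset.mem_filter.mp hiA
    obtain ⟨-, hiB⟩ := Finset.mem_filter.mp hiB
    rw [Finset.mem_range] at hi
    rw [List.getD_eq_getElem _ _ (by omega)] at hiA hiB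
    have hclosed : ∀ x ∈ l, ∀ w ∈ S, G.Adj x w → w ∈ l := by
      intro x hx
      have hl := List.take_append_drop (i+1) l
      have ha : l.take (i+1) ≠ [] := by
        rw [← List.length_pos_iff, List.length_take]; omega
      have hb : l.drop (i+1) ≠ [] := by
        rw [← List.length_pos_iff, List.length_drop]; omega
      obtain ⟨c, hc, hcp⟩ := rot G (l.take (i+1)) (l.drop (i+1)) ha hb (by rwa [hl])
        (by
          rw [List.head_eq_getElem, List.head_eq_getElem]
          simpa using hiA)
        (by
          rw [List.getLast_eq_getElem, List.getLast_drop, List.getLast_eq_getElem]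
          have e : (l.take (i+1)).length - 1 = i := by
            rw [List.length_take]; omega
          simp only [e, List.getElem_take]
          exact hiB.symm) x (by rwa [hl])
      rw [hl] at hcp
      exact hend x c hc hcp
    have hCS : l.toFinset ⊆ S := by
      intro x hx
      exact hlS x (List.mem_toFinset.mp hx)
    have hCc : l.toFinset.card = l.length := List.toFinset_card_of_nodup hnd
    have h1 := D_split G S l.toFinset hCS
    have h2 := Finset.card_sdiff_add_card_eq_card hCS
    have h3 := ih _ (by omega) (S \ l.toFinset) rfl
    have h4 : ∑ x ∈ l.toFinset, dg G (S \ l.toFinset) x = 0 := by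
      refine Finset.sum_eq_zero fun x hx => Finset.sum_eq_zero fun w hw => ?_
      rw [Finset.mem_sdiff, List.mem_toFinset] at hw
      rw [if_neg]
      intro h
      exact hw.2 (hclosed x (List.mem_toFinset.mp hx) w hw.1 h)
    have h5 : D G l.toFinset ≤ (t - 2) * l.toFinset.card := by
      rw [mul_comm, ← smul_eq_mul]
      refine Finset.sum_le_card_nsmul _ _ _ ?_
      intro x hx
      rw [← Finset.sum_erase _ (a := x) (by simp)]
      refine (Finset.sum_le_card_nsmul _ _ 1 (fun w _ => by split_ifs <;> simp)).trans ?_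
      rw [Finset.card_erase_of_mem hx, smul_eq_mul]
      omega
    rw [h1, h4, ← h2, mul_add]
    omega

end EG

theorem stmt_9 {V : Type*} [Fintype V] (G : SimpleGraph V) [DecidableRel G.Adj] (t : ℕ)
    (hfree : ¬ ∃ f : Fin t → V, Function.Injective f ∧
      ∀ (i : ℕ) (h : i + 1 < t), G.Adj (f ⟨i, Nat.lt_of_succ_lt h⟩) (f ⟨i + 1, h⟩)) :
    2 * G.edgeFinset.card ≤ (t - 2) * Fintype.card V := by
  classical
  have hp : ∀ l : List V, l.Nodup → List.IsChain G.Adj l → l.length < t := by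
    intro l hnd hch
    by_contra hlt
    push Not at hlt
    refine hfree ⟨fun i => l[i.1]'(by omega), ?_, ?_⟩
    · intro i j hij
      exact Fin.ext ((hnd.getElem_inj_iff).mp hij)
    · intro i h
      exact List.isChain_iff_getElem.mp hch i (by omega)
  have hD : 2 * G.edgeFinset.card = EG.D G Finset.univ := by
    rw [← G.sum_degrees_eq_twice_card_edges]
    unfold EG.D
    refine Finset.sum_congr rfl fun v _ => ?_
    rw [← SimpleGraph.card_neighborFinset_eq_degree, SimpleGraph.neighborFinset_eq_filter]
    simp
  rw [hD]
  by_cases ht : 2 ≤ t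
  · exact EG.main G t ht hp _ Finset.univ rfl
  · have : IsEmpty V := ⟨fun v => by
      have := hp [v] (by simp) (by simp)
      simp at this
      omega⟩
    simp [EG.D]
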